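/- Resource soundness for CBPV: fix γ and Γ, and let ρ be an environment mapping each variable carrying a nonzero grade in γ·Γ to a closed value of the expected type (i.e., γ·Γ ⊨ ρ in the resource logical relation). Then (1) if γ·Γ ⊢ V : A, then γ·ρ ⊢_lin V ⇓ W for some closed value W; (2) if γ·Γ ⊢ M : B, then γ·ρ ⊢_lin M ⇓ T for some closed terminal computation T. -/

import Mathlib

set_option autoImplicit false

/-- A preordered semiring of grades `(Q, +, 0, ·, 1, ≤co)`,
where `≤co` is a preorder respected by `+` and `·`. -/
structure CoSig (Q : Type) where
  add : Q → Q → Q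
  zero : Q
  mul : Q → Q → Q
  one : Q
  le : Q → Q → Prop
  add_assoc : ∀ a b c, add (add a b) c = add a (add b c)
  add_comm : ∀ a b, add a b = add b a
  add_zero : ∀ a, add a zero = a
  mul_assoc : ∀ a b c, mul (mul a b) c = mul a (mul b c)
  one_mul : ∀ a, mul one a = a
  mul_one : ∀ a, mul a one = a
  zero_mul : ∀ a, mul zero a = zero
  mul_zero : ∀ a, mul a zero = zero
  left_distrib : ∀ a b c, mul a (add b c) = add (mul a b) (mul a c)
  right_distrib : ∀ a b c, mul (add a b) c = add (mul a c) (mul b c)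
  le_refl : ∀ a, le a a
  le_trans : ∀ a b c, le a b → le b c → le a c
  add_le_add : ∀ a b c d, le a b → le c d → le (add a c) (add b d)
  mul_le_mul : ∀ a b c d, le a b → le c d → le (mul a c) (mul b d)

namespace CBPVCo

/-- Pointwise comparison of grade vectors: `γ₁ ≤co γ₂`. -/
def vle {Q : Type} (S : CoSig Q) (γ₁ γ₂ : List Q) : Prop := List.Forall₂ S.le γ₁ γ₂

/-- Pointwise addition of grade vectors. -/
def vadd {Q : Type} (S : CoSig Q) (γ₁ γ₂ : List Q) : List Q := List.zipWith S.add γ₁ γ₂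

/-- Pointwise scaling of a grade vector: `q·γ`. -/
def vscale {Q : Type} (S : CoSig Q) (q : Q) (γ : List Q) : List Q := γ.map (S.mul q)

/-- `γ ≤co 0̄`: every entry of the grade vector is discardable. -/
def leZero {Q : Type} (S : CoSig Q) (γ : List Q) : Prop := ∀ q ∈ γ, S.le q S.zero

mutual
/-- CBPV value types (coeffect version): `unit`, thunks `U B`, positive products. -/
inductive VTy (Q : Type) : Type where
  | unit : VTy Q
  | thunk : CTy Q → VTy Q
  | prod : VTy Q → VTy Q → VTy Q
/-- CBPV computation types (coeffect version): graded functions `A^q → B`,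
graded returners `F_q A`, negative products. -/
inductive CTy (Q : Type) : Type where
  | arr : VTy Q → Q → CTy Q → CTy Q
  | F : Q → VTy Q → CTy Q
  | wth : CTy Q → CTy Q → CTy Q
end

mutual
/-- CBPV values (de Bruijn indices for variables). -/
inductive Val (Q : Type) : Type where
  | var : Nat → Val Q
  | unit : Val Q
  | thunk : Comp Q → Val Q
  | pair : Val Q → Val Q → Val Q
/-- CBPV computations, with grade annotations on binders and on `return`. -/
inductive Comp (Q : Type) : Type where
  | lam : Q → Comp Q → Comp Q
  | app : Comp Q → Val Q → Comp Q
  | force : Val Q → Comp Q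
  | split : Q → Val Q → Comp Q → Comp Q
  | cpair : Comp Q → Comp Q → Comp Q
  | fst : Comp Q → Comp Q
  | snd : Comp Q → Comp Q
  | ret : Q → Val Q → Comp Q
  | letin : Q → Comp Q → Comp Q → Comp Q
end

mutual
/-- The value typing judgment `γ·Γ ⊢ V : A` of the CBPV type-and-coeffect system. -/
inductive VHasTy {Q : Type} (S : CoSig Q) : List Q → List (VTy Q) → Val Q → VTy Q → Prop where
  | var : ∀ {γ : List Q} {Γ : List (VTy Q)} {x : Nat} {q : Q} {A : VTy Q},
      γ.length = Γ.length → Γ[x]? = some A → γ[x]? = some q → S.le q S.one →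
      (∀ (i : Nat) (q' : Q), i ≠ x → γ[i]? = some q' → S.le q' S.zero) →
      VHasTy S γ Γ (.var x) A
  | unit : ∀ {γ : List Q} {Γ : List (VTy Q)},
      γ.length = Γ.length → leZero S γ → VHasTy S γ Γ .unit .unit
  | thunk : ∀ {γ : List Q} {Γ : List (VTy Q)} {M : Comp Q} {B : CTy Q},
      CHasTy S γ Γ M B → VHasTy S γ Γ (.thunk M) (.thunk B)
  | pair : ∀ {γ γ₁ γ₂ : List Q} {Γ : List (VTy Q)} {V₁ V₂ : Val Q} {A₁ A₂ : VTy Q},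
      VHasTy S γ₁ Γ V₁ A₁ → VHasTy S γ₂ Γ V₂ A₂ → vle S γ (vadd S γ₁ γ₂) →
      VHasTy S γ Γ (.pair V₁ V₂) (.prod A₁ A₂)

/-- The computation typing judgment `γ·Γ ⊢ M : B` of the CBPV type-and-coeffect system. -/
inductive CHasTy {Q : Type} (S : CoSig Q) : List Q → List (VTy Q) → Comp Q → CTy Q → Prop where
  | lam : ∀ {γ : List Q} {Γ : List (VTy Q)} {q : Q} {A : VTy Q} {M : Comp Q} {B : CTy Q},
      CHasTy S (q :: γ) (A :: Γ) M B → CHasTy S γ Γ (.lam q M) (.arr A q B)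
  | app : ∀ {γ γ₁ γ₂ : List Q} {Γ : List (VTy Q)} {M : Comp Q} {V : Val Q}
      {A : VTy Q} {q : Q} {B : CTy Q},
      CHasTy S γ₁ Γ M (.arr A q B) → VHasTy S γ₂ Γ V A →
      vle S γ (vadd S γ₁ (vscale S q γ₂)) → CHasTy S γ Γ (.app M V) B
  | force : ∀ {γ : List Q} {Γ : List (VTy Q)} {V : Val Q} {B : CTy Q},
      VHasTy S γ Γ V (.thunk B) → CHasTy S γ Γ (.force V) B
  | ret : ∀ {γ γ₁ : List Q} {Γ : List (VTy Q)} {q : Q} {V : Val Q} {A : VTy Q},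
      VHasTy S γ₁ Γ V A → vle S γ (vscale S q γ₁) → CHasTy S γ Γ (.ret q V) (.F q A)
  | letin : ∀ {γ γ₁ γ₂ : List Q} {Γ : List (VTy Q)} {q₁ q₂ : Q} {M N : Comp Q}
      {A : VTy Q} {B : CTy Q},
      CHasTy S γ₁ Γ M (.F q₁ A) → CHasTy S (S.mul q₁ q₂ :: γ₂) (A :: Γ) N B →
      vle S γ (vadd S (vscale S q₂ γ₁) γ₂) → CHasTy S γ Γ (.letin q₂ M N) B
  | split : ∀ {γ γ₁ γ₂ : List Q} {Γ : List (VTy Q)} {q : Q} {V : Val Q}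
      {A₁ A₂ : VTy Q} {N : Comp Q} {B : CTy Q},
      VHasTy S γ₁ Γ V (.prod A₁ A₂) → CHasTy S (q :: q :: γ₂) (A₂ :: A₁ :: Γ) N B →
      vle S γ (vadd S (vscale S q γ₁) γ₂) → CHasTy S γ Γ (.split q V N) B
  | cpair : ∀ {γ : List Q} {Γ : List (VTy Q)} {M₁ M₂ : Comp Q} {B₁ B₂ : CTy Q},
      CHasTy S γ Γ M₁ B₁ → CHasTy S γ Γ M₂ B₂ → CHasTy S γ Γ (.cpair M₁ M₂) (.wth B₁ B₂)
  | fst : ∀ {γ : List Q} {Γ : List (VTy Q)} {M : Comp Q} {B₁ B₂ : CTy Q},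
      CHasTy S γ Γ M (.wth B₁ B₂) → CHasTy S γ Γ (.fst M) B₁
  | snd : ∀ {γ : List Q} {Γ : List (VTy Q)} {M : Comp Q} {B₁ B₂ : CTy Q},
      CHasTy S γ Γ M (.wth B₁ B₂) → CHasTy S γ Γ (.snd M) B₂
end

/-- Closed values: closures, unit, pairs, and the special untyped
discarded value `⚡` (`bolt`). -/
inductive CloVal (Q : Type) : Type where
  | clo : List Q → List (CloVal Q) → Comp Q → CloVal Q
  | unit : CloVal Q
  | pair : CloVal Q → CloVal Q → CloVal Q
  | bolt : CloVal Q

/-- Closed terminal computations. -/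
inductive Terminal (Q : Type) : Type where
  | ret : Q → CloVal Q → Terminal Q
  | lamClo : List Q → List (CloVal Q) → Q → Comp Q → Terminal Q
  | cpairClo : List Q → List (CloVal Q) → Comp Q → Comp Q → Terminal Q

/-- The resource-tracking value judgment `γ·ρ ⊢_lin V ⇓ W`. -/
inductive EvalVal {Q : Type} (S : CoSig Q) :
    List Q → List (CloVal Q) → Val Q → CloVal Q → Prop where
  | var : ∀ {γ : List Q} {ρ : List (CloVal Q)} {x : Nat} {q : Q} {W : CloVal Q},
      γ.length = ρ.length → ρ[x]? = some W → γ[x]? = some q → S.le q S.one →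
      (∀ (i : Nat) (q' : Q), i ≠ x → γ[i]? = some q' → S.le q' S.zero) →
      EvalVal S γ ρ (.var x) W
  | unit : ∀ {γ : List Q} {ρ : List (CloVal Q)},
      γ.length = ρ.length → leZero S γ → EvalVal S γ ρ .unit .unit
  | thunk : ∀ {γ γ' : List Q} {ρ : List (CloVal Q)} {M : Comp Q},
      vle S γ γ' → EvalVal S γ ρ (.thunk M) (.clo γ' ρ M)
  | pair : ∀ {γ γ₁ γ₂ : List Q} {ρ : List (CloVal Q)} {V₁ V₂ : Val Q} {W₁ W₂ : CloVal Q},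
      EvalVal S γ₁ ρ V₁ W₁ → EvalVal S γ₂ ρ V₂ W₂ → vle S γ (vadd S γ₁ γ₂) →
      EvalVal S γ ρ (.pair V₁ V₂) (.pair W₁ W₂)

/-- The resource-tracking big-step judgment `γ·ρ ⊢_lin M ⇓ T`: elimination
rules at grade `0` discard the eliminated value, binding `⚡` in its place. -/
inductive EvalComp {Q : Type} (S : CoSig Q) :
    List Q → List (CloVal Q) → Comp Q → Terminal Q → Prop where
  | lam : ∀ {γ γ' : List Q} {ρ : List (CloVal Q)} {q : Q} {M : Comp Q},
      vle S γ γ' → EvalComp S γ ρ (.lam q M) (.lamClo γ' ρ q M)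
  | cpair : ∀ {γ γ' : List Q} {ρ : List (CloVal Q)} {M₁ M₂ : Comp Q},
      vle S γ γ' → EvalComp S γ ρ (.cpair M₁ M₂) (.cpairClo γ' ρ M₁ M₂)
  | ret : ∀ {γ γ₁ : List Q} {ρ : List (CloVal Q)} {q : Q} {V : Val Q} {W : CloVal Q},
      q ≠ S.zero → EvalVal S γ₁ ρ V W → vle S γ (vscale S q γ₁) →
      EvalComp S γ ρ (.ret q V) (.ret q W)
  | retZero : ∀ {γ : List Q} {ρ : List (CloVal Q)} {V : Val Q},
      leZero S γ → EvalComp S γ ρ (.ret S.zero V) (.ret S.zero .bolt)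
  | app : ∀ {γ γ₁ γ₂ γ' : List Q} {ρ ρ' : List (CloVal Q)} {M M' : Comp Q}
      {V : Val Q} {W : CloVal Q} {q : Q} {T : Terminal Q},
      q ≠ S.zero → EvalComp S γ₁ ρ M (.lamClo γ' ρ' q M') → EvalVal S γ₂ ρ V W →
      EvalComp S (q :: γ') (W :: ρ') M' T → vle S γ (vadd S γ₁ (vscale S q γ₂)) →
      EvalComp S γ ρ (.app M V) T
  | appZero : ∀ {γ γ₁ γ' : List Q} {ρ ρ' : List (CloVal Q)} {M M' : Comp Q}
      {V : Val Q} {T : Terminal Q},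
      EvalComp S γ₁ ρ M (.lamClo γ' ρ' S.zero M') →
      EvalComp S (S.zero :: γ') (.bolt :: ρ') M' T → vle S γ γ₁ →
      EvalComp S γ ρ (.app M V) T
  | force : ∀ {γ γ' : List Q} {ρ ρ' : List (CloVal Q)} {V : Val Q} {M : Comp Q} {T : Terminal Q},
      EvalVal S γ ρ V (.clo γ' ρ' M) → EvalComp S γ' ρ' M T → EvalComp S γ ρ (.force V) T
  | letin : ∀ {γ γ₁ γ₂ : List Q} {ρ : List (CloVal Q)} {q₁ q₂ : Q} {M N : Comp Q}
      {W : CloVal Q} {T : Terminal Q},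
      q₂ ≠ S.zero → EvalComp S γ₁ ρ M (.ret q₁ W) →
      EvalComp S (S.mul q₁ q₂ :: γ₂) (W :: ρ) N T →
      vle S γ (vadd S (vscale S q₂ γ₁) γ₂) → EvalComp S γ ρ (.letin q₂ M N) T
  | letinZero : ∀ {γ γ₂ : List Q} {ρ : List (CloVal Q)} {M N : Comp Q} {T : Terminal Q},
      EvalComp S (S.zero :: γ₂) (.bolt :: ρ) N T → vle S γ γ₂ →
      EvalComp S γ ρ (.letin S.zero M N) T
  | split : ∀ {γ γ₁ γ₂ : List Q} {ρ : List (CloVal Q)} {q : Q} {V : Val Q}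
      {W₁ W₂ : CloVal Q} {N : Comp Q} {T : Terminal Q},
      q ≠ S.zero → EvalVal S γ₁ ρ V (.pair W₁ W₂) →
      EvalComp S (q :: q :: γ₂) (W₂ :: W₁ :: ρ) N T →
      vle S γ (vadd S (vscale S q γ₁) γ₂) → EvalComp S γ ρ (.split q V N) T
  | splitZero : ∀ {γ γ₂ : List Q} {ρ : List (CloVal Q)} {V : Val Q} {N : Comp Q} {T : Terminal Q},
      EvalComp S (S.zero :: S.zero :: γ₂) (.bolt :: .bolt :: ρ) N T → vle S γ γ₂ →
      EvalComp S γ ρ (.split S.zero V N) T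
  | fst : ∀ {γ γ' : List Q} {ρ ρ' : List (CloVal Q)} {M M₁ M₂ : Comp Q} {T : Terminal Q},
      EvalComp S γ ρ M (.cpairClo γ' ρ' M₁ M₂) → EvalComp S γ' ρ' M₁ T →
      EvalComp S γ ρ (.fst M) T
  | snd : ∀ {γ γ' : List Q} {ρ ρ' : List (CloVal Q)} {M M₁ M₂ : Comp Q} {T : Terminal Q},
      EvalComp S γ ρ M (.cpairClo γ' ρ' M₁ M₂) → EvalComp S γ' ρ' M₂ T →
      EvalComp S γ ρ (.snd M) T

mutual
/-- The resource logical relation on closed values: `W ∈ 𝒲⟦A⟧`. -/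
def WRel {Q : Type} (S : CoSig Q) : VTy Q → CloVal Q → Prop
  | .unit, W => W = CloVal.unit
  | .thunk B, W => ∃ (γ : List Q) (ρ : List (CloVal Q)) (M : Comp Q),
      W = CloVal.clo γ ρ M ∧ ∃ (T : Terminal Q), EvalComp S γ ρ M T ∧ TRel S B T
  | .prod A₁ A₂, W => ∃ (W₁ W₂ : CloVal Q), W = CloVal.pair W₁ W₂ ∧
      WRel S A₁ W₁ ∧ WRel S A₂ W₂

/-- The resource logical relation on closed terminals, where a value graded by
`0` is the discarded value `⚡`: `T ∈ 𝒯⟦B⟧`. -/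
def TRel {Q : Type} (S : CoSig Q) : CTy Q → Terminal Q → Prop
  | .F q A, T => ∃ (W : CloVal Q), T = Terminal.ret q W ∧
      ((q = S.zero ∧ W = CloVal.bolt) ∨ (q ≠ S.zero ∧ WRel S A W))
  | .arr A q B, T => ∃ (γ : List Q) (ρ : List (CloVal Q)) (M : Comp Q),
      T = Terminal.lamClo γ ρ q M ∧
      ∀ (W : CloVal Q), ((q = S.zero ∧ W = CloVal.bolt) ∨ (q ≠ S.zero ∧ WRel S A W)) →
        ∃ (T' : Terminal Q), EvalComp S (q :: γ) (W :: ρ) M T' ∧ TRel S B T'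
  | .wth B₁ B₂, T => ∃ (γ : List Q) (ρ : List (CloVal Q)) (M₁ M₂ : Comp Q),
      T = Terminal.cpairClo γ ρ M₁ M₂ ∧
      (∃ (T' : Terminal Q), EvalComp S γ ρ M₁ T' ∧ TRel S B₁ T') ∧
      (∃ (T' : Terminal Q), EvalComp S γ ρ M₂ T' ∧ TRel S B₂ T')
end

/-- The graded relation on closed values: `𝒲_0⟦A⟧ = {⚡}` and
`𝒲_q⟦A⟧ = 𝒲⟦A⟧` for `q ≠ 0`. -/
def WRelG {Q : Type} (S : CoSig Q) (q : Q) (A : VTy Q) (W : CloVal Q) : Prop :=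
  (q = S.zero ∧ W = CloVal.bolt) ∨ (q ≠ S.zero ∧ WRel S A W)

/-- The resource logical relation on computations with graded environments. -/
def MRel {Q : Type} (S : CoSig Q) (B : CTy Q) (γ : List Q) (ρ : List (CloVal Q))
    (M : Comp Q) : Prop :=
  ∃ (T : Terminal Q), EvalComp S γ ρ M T ∧ TRel S B T

/-- The resource logical relation on values with graded environments. -/
def VRel {Q : Type} (S : CoSig Q) (A : VTy Q) (γ : List Q) (ρ : List (CloVal Q))
    (V : Val Q) : Prop :=
  ∃ (W : CloVal Q), EvalVal S γ ρ V W ∧ WRel S A W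

/-- Semantic typing of environments: `γ·Γ ⊨ ρ` — the environment maps every
variable carrying a nonzero grade in `γ·Γ` to a closed value of the expected type. -/
def EnvOk {Q : Type} (S : CoSig Q) (γ : List Q) (Γ : List (VTy Q))
    (ρ : List (CloVal Q)) : Prop :=
  γ.length = Γ.length ∧ ρ.length = Γ.length ∧
  ∀ (x : Nat) (q : Q) (A : VTy Q), γ[x]? = some q → Γ[x]? = some A → q ≠ S.zero →
    ∃ (W : CloVal Q), ρ[x]? = some W ∧ WRel S A W

/-- Resource semantic typing of values: `γ·Γ ⊨_lin V : A`. -/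
def VSem {Q : Type} (S : CoSig Q) (γ : List Q) (Γ : List (VTy Q)) (V : Val Q)
    (A : VTy Q) : Prop :=
  ∀ (ρ : List (CloVal Q)), EnvOk S γ Γ ρ → VRel S A γ ρ V

/-- Resource semantic typing of computations: `γ·Γ ⊨_lin M : B`. -/
def CSem {Q : Type} (S : CoSig Q) (γ : List Q) (Γ : List (VTy Q)) (M : Comp Q)
    (B : CTy Q) : Prop :=
  ∀ (ρ : List (CloVal Q)), EnvOk S γ Γ ρ → MRel S B γ ρ M

/-! The proof is by a logical relation: every typing rule is sound for semantic typing, so typing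
implies semantic typing, which contains termination.

Semantic typing of `ρ` by `γ·Γ` depends only on the support of `γ`, so a premise graded by `γ'` may
be run in the same environment as soon as `supp γ' ⊆ supp γ`. The two conditions on grades provide
this for `γ ≤co γ₁ + γ₂` and, when `q ≠ 0`, for `γ ≤co q·γ₁`. When `q = 0` the support of the
scaled premise is out of control, and that is exactly when evaluation skips it and binds `⚡`. -/

section

variable {Q : Type} {S : CoSig Q} {q q₁ q₂ : Q} {γ γ' γ₁ γ₂ : List Q} {Γ : List (VTy Q)}
  {ρ : List (CloVal Q)} {A A₁ A₂ : VTy Q} {B B₁ B₂ : CTy Q} {V V₁ V₂ : Val Q}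
  {M M₁ M₂ N : Comp Q} {W : CloVal Q} {T : Terminal Q}

/-- The ordered form of being a zerosumfree semiring: a sum lies above `0` only if both summands
are `0`. It lets supports shrink along `≤co` and from a sum to its summands. -/
def ZeroSumFree (S : CoSig Q) : Prop :=
  ∀ q₁ q₂ : Q, S.le S.zero (S.add q₁ q₂) → q₁ = S.zero ∧ q₂ = S.zero

/-- The semiring of grades has no zero divisors, so scaling by a nonzero grade preserves
supports. -/
def NoZeroDiv (S : CoSig Q) : Prop :=
  ∀ q₁ q₂ : Q, S.mul q₁ q₂ = S.zero → q₁ = S.zero ∨ q₂ = S.zero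

/-- Inclusion of supports of grade vectors of equal length: every position at which `γ₁` is
nonzero is one at which `γ₂` is nonzero. -/
def SuppSubset (S : CoSig Q) (γ₁ γ₂ : List Q) : Prop :=
  List.Forall₂ (fun q₁ q₂ => q₁ ≠ S.zero → q₂ ≠ S.zero) γ₁ γ₂

theorem ZeroSumFree.eq_zero_of_zero_le (hsum : ZeroSumFree S) (h : S.le S.zero q) :
    q = S.zero :=
  (hsum q S.zero (by rwa [S.add_zero])).1

theorem ZeroSumFree.eq_zero_of_add_eq_zero (hsum : ZeroSumFree S)
    (h : S.add q₁ q₂ = S.zero) : q₁ = S.zero :=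
  (hsum q₁ q₂ (h ▸ S.le_refl _)).1

theorem vle_refl (γ : List Q) : vle S γ γ :=
  List.forall₂_same.2 fun q _ => S.le_refl q

theorem vle.length_eq (h : vle S γ γ') : γ.length = γ'.length :=
  List.Forall₂.length_eq h

theorem vadd_comm (γ₁ γ₂ : List Q) : vadd S γ₁ γ₂ = vadd S γ₂ γ₁ :=
  List.zipWith_comm_of_comm S.add_comm

theorem length_vadd (h : γ₁.length = γ₂.length) : (vadd S γ₁ γ₂).length = γ₁.length := by
  simp [vadd, h]

theorem length_vscale (q : Q) (γ : List Q) : (vscale S q γ).length = γ.length :=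
  List.length_map _

theorem vadd_vscale_zero (h : γ₁.length = γ₂.length) :
    vadd S γ₁ (vscale S S.zero γ₂) = γ₁ :=
  List.ext_getElem (by simp [vadd, vscale, h])
    (by simp [vadd, vscale, S.zero_mul, S.add_zero])

theorem vscale_zero_vadd (h : γ₁.length = γ₂.length) :
    vadd S (vscale S S.zero γ₁) γ₂ = γ₂ := by
  rw [vadd_comm, vadd_vscale_zero h.symm]

theorem leZero_of_vle_vscale_zero (h : vle S γ (vscale S S.zero γ')) : leZero S γ := by
  intro q hq
  obtain ⟨i, hi, rfl⟩ := List.getElem_of_mem hq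
  have hle := List.Forall₂.get h hi (h.length_eq ▸ hi)
  simpa [vscale, S.zero_mul] using hle

theorem SuppSubset.of_vle (hsum : ZeroSumFree S) (h : vle S γ γ') : SuppSubset S γ' γ :=
  List.Forall₂.flip <| List.Forall₂.imp
    (fun _ _ hle hne hzero => hne (hsum.eq_zero_of_zero_le (hzero ▸ hle))) h

theorem suppSubset_vadd_left (hsum : ZeroSumFree S) (h : γ₁.length = γ₂.length) :
    SuppSubset S γ₁ (vadd S γ₁ γ₂) := by
  refine List.forall₂_iff_get.2 ⟨(length_vadd h).symm, fun i _ _ hne hzero => hne ?_⟩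
  exact hsum.eq_zero_of_add_eq_zero (by simpa [vadd] using hzero)

theorem suppSubset_vscale (hdiv : NoZeroDiv S) (hq : q ≠ S.zero) (γ : List Q) :
    SuppSubset S γ (vscale S q γ) :=
  List.forall₂_map_right_iff.2 <| List.forall₂_same.2 fun q' _ hne hzero =>
    (hdiv q q' hzero).elim hq hne

theorem EnvOk.of_suppSubset (h : EnvOk S γ Γ ρ) (hsupp : SuppSubset S γ' γ) :
    EnvOk S γ' Γ ρ := by
  refine ⟨(List.Forall₂.length_eq hsupp).trans h.1, h.2.1, fun x q A hq hA hne => ?_⟩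
  obtain ⟨hx, rfl⟩ := List.getElem?_eq_some_iff.1 hq
  have hx' : x < γ.length := List.Forall₂.length_eq hsupp ▸ hx
  exact h.2.2 x γ[x] A (List.getElem?_eq_getElem hx') hA (List.Forall₂.get hsupp hx hx' hne)

theorem EnvOk.of_vle (hsum : ZeroSumFree S) (h : EnvOk S γ Γ ρ) (hle : vle S γ γ') :
    EnvOk S γ' Γ ρ :=
  h.of_suppSubset (.of_vle hsum hle)

theorem EnvOk.of_vscale (hdiv : NoZeroDiv S) (hq : q ≠ S.zero)
    (h : EnvOk S (vscale S q γ) Γ ρ) : EnvOk S γ Γ ρ :=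
  h.of_suppSubset (suppSubset_vscale hdiv hq γ)

theorem EnvOk.left_of_vle_vadd (hsum : ZeroSumFree S) (h : EnvOk S γ Γ ρ)
    (hlen : γ₁.length = γ₂.length) (hle : vle S γ (vadd S γ₁ γ₂)) : EnvOk S γ₁ Γ ρ :=
  (h.of_vle hsum hle).of_suppSubset (suppSubset_vadd_left hsum hlen)

theorem EnvOk.right_of_vle_vadd (hsum : ZeroSumFree S) (h : EnvOk S γ Γ ρ)
    (hlen : γ₁.length = γ₂.length) (hle : vle S γ (vadd S γ₁ γ₂)) : EnvOk S γ₂ Γ ρ :=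
  h.left_of_vle_vadd hsum hlen.symm (vadd_comm γ₁ γ₂ ▸ hle)

theorem EnvOk.length_eq (h : EnvOk S γ Γ ρ) : γ.length = ρ.length :=
  h.1.trans h.2.1.symm

theorem EnvOk.cons (h : EnvOk S γ Γ ρ) (hW : q ≠ S.zero → WRel S A W) :
    EnvOk S (q :: γ) (A :: Γ) (W :: ρ) := by
  refine ⟨congrArg (· + 1) h.1, congrArg (· + 1) h.2.1, ?_⟩
  rintro (_ | x) q' A' hq hA hne
  · cases hq
    cases hA
    exact ⟨W, rfl, hW hne⟩
  · exact h.2.2 x q' A' hq hA hne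

theorem EnvOk.cons_zero (h : EnvOk S γ Γ ρ) : EnvOk S (S.zero :: γ) (A :: Γ) (W :: ρ) :=
  h.cons fun hne => absurd rfl hne

theorem wRel_thunk : WRel S (.thunk B) W ↔ ∃ γ ρ M, W = .clo γ ρ M ∧ MRel S B γ ρ M := by
  rw [WRel]; rfl

theorem wRel_prod : WRel S (.prod A₁ A₂) W ↔
    ∃ W₁ W₂, W = .pair W₁ W₂ ∧ WRel S A₁ W₁ ∧ WRel S A₂ W₂ := by
  rw [WRel]

theorem tRel_F : TRel S (.F q A) T ↔ ∃ W, T = .ret q W ∧ WRelG S q A W := by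
  rw [TRel]; rfl

theorem tRel_arr : TRel S (.arr A q B) T ↔
    ∃ γ ρ M, T = .lamClo γ ρ q M ∧ ∀ W, WRelG S q A W → MRel S B (q :: γ) (W :: ρ) M := by
  rw [TRel]; rfl

theorem tRel_wth : TRel S (.wth B₁ B₂) T ↔
    ∃ γ ρ M₁ M₂, T = .cpairClo γ ρ M₁ M₂ ∧ MRel S B₁ γ ρ M₁ ∧ MRel S B₂ γ ρ M₂ := by
  rw [TRel]; rfl

theorem wRelG_zero_bolt : WRelG S S.zero A .bolt :=
  .inl ⟨rfl, rfl⟩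

theorem WRelG.wRel (h : WRelG S q A W) (hq : q ≠ S.zero) : WRel S A W :=
  h.elim (fun hzero => absurd hzero.1 hq) And.right

theorem VSem.var (hnontriv : S.one ≠ S.zero) (hsum : ZeroSumFree S) {x : ℕ}
    (hA : Γ[x]? = some A) (hq : γ[x]? = some q) (hone : S.le q S.one)
    (hrest : ∀ (i : ℕ) (q' : Q), i ≠ x → γ[i]? = some q' → S.le q' S.zero) :
    VSem S γ Γ (.var x) A := by
  intro ρ hρ
  have hne : q ≠ S.zero := by
    rintro rfl
    exact hnontriv (hsum.eq_zero_of_zero_le hone)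
  obtain ⟨W, hW, relW⟩ := hρ.2.2 x q A hq hA hne
  exact ⟨W, .var hρ.length_eq hW hq hone hrest, relW⟩

theorem VSem.unit (hzero : leZero S γ) : VSem S γ Γ .unit .unit :=
  fun _ hρ => ⟨.unit, .unit hρ.length_eq hzero, by rw [WRel]⟩

theorem VSem.thunk (hM : CSem S γ Γ M B) : VSem S γ Γ (.thunk M) (.thunk B) :=
  fun ρ hρ => ⟨_, .thunk (vle_refl γ), wRel_thunk.2 ⟨γ, ρ, M, rfl, hM ρ hρ⟩⟩

theorem VSem.pair (hsum : ZeroSumFree S) (hV₁ : VSem S γ₁ Γ V₁ A₁) (hV₂ : VSem S γ₂ Γ V₂ A₂)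
    (hlen : γ₁.length = γ₂.length) (hle : vle S γ (vadd S γ₁ γ₂)) :
    VSem S γ Γ (.pair V₁ V₂) (.prod A₁ A₂) := by
  intro ρ hρ
  obtain ⟨W₁, evalV₁, relW₁⟩ := hV₁ ρ (hρ.left_of_vle_vadd hsum hlen hle)
  obtain ⟨W₂, evalV₂, relW₂⟩ := hV₂ ρ (hρ.right_of_vle_vadd hsum hlen hle)
  exact ⟨_, .pair evalV₁ evalV₂ hle, wRel_prod.2 ⟨W₁, W₂, rfl, relW₁, relW₂⟩⟩

theorem CSem.lam (hM : CSem S (q :: γ) (A :: Γ) M B) : CSem S γ Γ (.lam q M) (.arr A q B) :=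
  fun ρ hρ => ⟨_, .lam (vle_refl γ),
    tRel_arr.2 ⟨γ, ρ, M, rfl, fun W relW => hM (W :: ρ) (hρ.cons relW.wRel)⟩⟩

theorem CSem.app (hsum : ZeroSumFree S) (hdiv : NoZeroDiv S) (hM : CSem S γ₁ Γ M (.arr A q B))
    (hV : VSem S γ₂ Γ V A) (hlen : γ₁.length = γ₂.length)
    (hle : vle S γ (vadd S γ₁ (vscale S q γ₂))) : CSem S γ Γ (.app M V) B := by
  intro ρ hρ
  have hlen' : γ₁.length = (vscale S q γ₂).length := hlen.trans (length_vscale q γ₂).symm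
  obtain ⟨T₁, evalM, relT₁⟩ := hM ρ (hρ.left_of_vle_vadd hsum hlen' hle)
  obtain ⟨γ', ρ', M', rfl, hbody⟩ := tRel_arr.1 relT₁
  by_cases hq : q = S.zero
  · subst hq
    obtain ⟨T, evalBody, relT⟩ := hbody .bolt wRelG_zero_bolt
    exact ⟨T, .appZero evalM evalBody (vadd_vscale_zero hlen ▸ hle), relT⟩
  · have hρ₂ : EnvOk S γ₂ Γ ρ := (hρ.right_of_vle_vadd hsum hlen' hle).of_vscale hdiv hq
    obtain ⟨W, evalV, relW⟩ := hV ρ hρ₂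
    obtain ⟨T, evalBody, relT⟩ := hbody W (.inr ⟨hq, relW⟩)
    exact ⟨T, .app hq evalM evalV evalBody hle, relT⟩

theorem CSem.force (hV : VSem S γ Γ V (.thunk B)) : CSem S γ Γ (.force V) B := by
  intro ρ hρ
  obtain ⟨W, evalV, relW⟩ := hV ρ hρ
  obtain ⟨γ', ρ', M, rfl, T, evalM, relT⟩ := wRel_thunk.1 relW
  exact ⟨T, .force evalV evalM, relT⟩

theorem CSem.ret (hsum : ZeroSumFree S) (hdiv : NoZeroDiv S) (hV : VSem S γ₁ Γ V A)
    (hle : vle S γ (vscale S q γ₁)) : CSem S γ Γ (.ret q V) (.F q A) := by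
  intro ρ hρ
  by_cases hq : q = S.zero
  · subst hq
    exact ⟨_, .retZero (leZero_of_vle_vscale_zero hle), tRel_F.2 ⟨.bolt, rfl, wRelG_zero_bolt⟩⟩
  · obtain ⟨W, evalV, relW⟩ := hV ρ ((hρ.of_vle hsum hle).of_vscale hdiv hq)
    exact ⟨_, .ret hq evalV hle, tRel_F.2 ⟨W, rfl, .inr ⟨hq, relW⟩⟩⟩

theorem CSem.letin (hsum : ZeroSumFree S) (hdiv : NoZeroDiv S) (hM : CSem S γ₁ Γ M (.F q₁ A))
    (hN : CSem S (S.mul q₁ q₂ :: γ₂) (A :: Γ) N B) (hlen : γ₁.length = γ₂.length)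
    (hle : vle S γ (vadd S (vscale S q₂ γ₁) γ₂)) : CSem S γ Γ (.letin q₂ M N) B := by
  intro ρ hρ
  have hlen' : (vscale S q₂ γ₁).length = γ₂.length := (length_vscale q₂ γ₁).trans hlen
  have hρ₂ : EnvOk S γ₂ Γ ρ := hρ.right_of_vle_vadd hsum hlen' hle
  by_cases hq : q₂ = S.zero
  · subst hq
    rw [S.mul_zero] at hN
    obtain ⟨T, evalN, relT⟩ := hN (.bolt :: ρ) hρ₂.cons_zero
    exact ⟨T, .letinZero evalN (vscale_zero_vadd hlen ▸ hle), relT⟩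
  · have hρ₁ : EnvOk S γ₁ Γ ρ := (hρ.left_of_vle_vadd hsum hlen' hle).of_vscale hdiv hq
    obtain ⟨T₁, evalM, relT₁⟩ := hM ρ hρ₁
    obtain ⟨W, rfl, relW⟩ := tRel_F.1 relT₁
    have hW : S.mul q₁ q₂ ≠ S.zero → WRel S A W := fun hne =>
      relW.wRel fun hzero => hne (by rw [hzero, S.zero_mul])
    obtain ⟨T, evalN, relT⟩ := hN (W :: ρ) (hρ₂.cons hW)
    exact ⟨T, .letin hq evalM evalN hle, relT⟩

theorem CSem.split (hsum : ZeroSumFree S) (hdiv : NoZeroDiv S)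
    (hV : VSem S γ₁ Γ V (.prod A₁ A₂)) (hN : CSem S (q :: q :: γ₂) (A₂ :: A₁ :: Γ) N B)
    (hlen : γ₁.length = γ₂.length) (hle : vle S γ (vadd S (vscale S q γ₁) γ₂)) :
    CSem S γ Γ (.split q V N) B := by
  intro ρ hρ
  have hlen' : (vscale S q γ₁).length = γ₂.length := (length_vscale q γ₁).trans hlen
  have hρ₂ : EnvOk S γ₂ Γ ρ := hρ.right_of_vle_vadd hsum hlen' hle
  by_cases hq : q = S.zero
  · subst hq
    obtain ⟨T, evalN, relT⟩ := hN (.bolt :: .bolt :: ρ) hρ₂.cons_zero.cons_zero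
    exact ⟨T, .splitZero evalN (vscale_zero_vadd hlen ▸ hle), relT⟩
  · have hρ₁ : EnvOk S γ₁ Γ ρ := (hρ.left_of_vle_vadd hsum hlen' hle).of_vscale hdiv hq
    obtain ⟨W, evalV, relW⟩ := hV ρ hρ₁
    obtain ⟨W₁, W₂, rfl, relW₁, relW₂⟩ := wRel_prod.1 relW
    obtain ⟨T, evalN, relT⟩ :=
      hN (W₂ :: W₁ :: ρ) ((hρ₂.cons fun _ => relW₁).cons fun _ => relW₂)
    exact ⟨T, .split hq evalV evalN hle, relT⟩

theorem CSem.cpair (hM₁ : CSem S γ Γ M₁ B₁) (hM₂ : CSem S γ Γ M₂ B₂) :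
    CSem S γ Γ (.cpair M₁ M₂) (.wth B₁ B₂) :=
  fun ρ hρ => ⟨_, .cpair (vle_refl γ), tRel_wth.2 ⟨γ, ρ, M₁, M₂, rfl, hM₁ ρ hρ, hM₂ ρ hρ⟩⟩

theorem CSem.fst (hM : CSem S γ Γ M (.wth B₁ B₂)) : CSem S γ Γ (.fst M) B₁ := by
  intro ρ hρ
  obtain ⟨T, evalM, relT⟩ := hM ρ hρ
  obtain ⟨γ', ρ', M₁, M₂, rfl, ⟨T₁, evalM₁, relT₁⟩, _⟩ := tRel_wth.1 relT
  exact ⟨T₁, .fst evalM evalM₁, relT₁⟩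

theorem CSem.snd (hM : CSem S γ Γ M (.wth B₁ B₂)) : CSem S γ Γ (.snd M) B₂ := by
  intro ρ hρ
  obtain ⟨T, evalM, relT⟩ := hM ρ hρ
  obtain ⟨γ', ρ', M₁, M₂, rfl, _, T₂, evalM₂, relT₂⟩ := tRel_wth.1 relT
  exact ⟨T₂, .snd evalM evalM₂, relT₂⟩

theorem length_eq_of_vle_vadd {n : ℕ} (h₁ : γ₁.length = n) (h₂ : γ₂.length = n)
    (hle : vle S γ (vadd S γ₁ γ₂)) : γ.length = n := by
  rw [hle.length_eq, length_vadd (h₁.trans h₂.symm), h₁]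

mutual

theorem VHasTy.length_eq {γ : List Q} {Γ : List (VTy Q)} {V : Val Q} {A : VTy Q} :
    VHasTy S γ Γ V A → γ.length = Γ.length
  | .var hlen _ _ _ _ => hlen
  | .unit hlen _ => hlen
  | .thunk hM => hM.length_eq
  | .pair hV₁ hV₂ hle => length_eq_of_vle_vadd hV₁.length_eq hV₂.length_eq hle

theorem CHasTy.length_eq {γ : List Q} {Γ : List (VTy Q)} {M : Comp Q} {B : CTy Q} :
    CHasTy S γ Γ M B → γ.length = Γ.length
  | .lam hM => Nat.succ.inj hM.length_eq
  | .app hM hV hle =>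
    length_eq_of_vle_vadd hM.length_eq ((length_vscale _ _).trans hV.length_eq) hle
  | .force hV => hV.length_eq
  | .ret hV hle => hle.length_eq.trans ((length_vscale _ _).trans hV.length_eq)
  | .letin hM hN hle =>
    length_eq_of_vle_vadd ((length_vscale _ _).trans hM.length_eq)
      (Nat.succ.inj hN.length_eq) hle
  | .split hV hN hle =>
    length_eq_of_vle_vadd ((length_vscale _ _).trans hV.length_eq)
      (Nat.succ.inj (Nat.succ.inj hN.length_eq)) hle
  | .cpair hM₁ _ => hM₁.length_eq
  | .fst hM => hM.length_eq
  | .snd hM => hM.length_eq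

end

mutual

theorem VHasTy.vSem (hnontriv : S.one ≠ S.zero) (hsum : ZeroSumFree S) (hdiv : NoZeroDiv S)
    {γ : List Q} {Γ : List (VTy Q)} {V : Val Q} {A : VTy Q} :
    VHasTy S γ Γ V A → VSem S γ Γ V A
  | .var _ hA hq hone hrest => .var hnontriv hsum hA hq hone hrest
  | .unit _ hzero => .unit hzero
  | .thunk hM => .thunk (hM.cSem hnontriv hsum hdiv)
  | .pair hV₁ hV₂ hle =>
    .pair hsum (hV₁.vSem hnontriv hsum hdiv) (hV₂.vSem hnontriv hsum hdiv)
      (hV₁.length_eq.trans hV₂.length_eq.symm) hle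

theorem CHasTy.cSem (hnontriv : S.one ≠ S.zero) (hsum : ZeroSumFree S) (hdiv : NoZeroDiv S)
    {γ : List Q} {Γ : List (VTy Q)} {M : Comp Q} {B : CTy Q} :
    CHasTy S γ Γ M B → CSem S γ Γ M B
  | .lam hM => .lam (hM.cSem hnontriv hsum hdiv)
  | .app hM hV hle =>
    .app hsum hdiv (hM.cSem hnontriv hsum hdiv) (hV.vSem hnontriv hsum hdiv)
      (hM.length_eq.trans hV.length_eq.symm) hle
  | .force hV => .force (hV.vSem hnontriv hsum hdiv)
  | .ret hV hle => .ret hsum hdiv (hV.vSem hnontriv hsum hdiv) hle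
  | .letin hM hN hle =>
    .letin hsum hdiv (hM.cSem hnontriv hsum hdiv) (hN.cSem hnontriv hsum hdiv)
      (hM.length_eq.trans (Nat.succ.inj hN.length_eq).symm) hle
  | .split hV hN hle =>
    .split hsum hdiv (hV.vSem hnontriv hsum hdiv) (hN.cSem hnontriv hsum hdiv)
      (hV.length_eq.trans (Nat.succ.inj (Nat.succ.inj hN.length_eq)).symm) hle
  | .cpair hM₁ hM₂ =>
    .cpair (hM₁.cSem hnontriv hsum hdiv) (hM₂.cSem hnontriv hsum hdiv)
  | .fst hM => .fst (hM.cSem hnontriv hsum hdiv)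
  | .snd hM => .snd (hM.cSem hnontriv hsum hdiv)

end

end

/-- Resource soundness for CBPV: over a preordered semiring that is nontrivial,
whose preorder relates `0` below a sum only when both summands are `0`, and with
no nonzero zero divisors, if the environment provides closed values of the
expected types for all variables of nonzero grade, then every well-typed value
evaluates (under `⊢_lin`) to some closed value, and every well-typed computation
evaluates to some closed terminal computation. -/
theorem resource_soundness {Q : Type} (S : CoSig Q)
    (hnontriv : S.one ≠ S.zero)
    (hzero_add : ∀ q₁ q₂ : Q, S.le S.zero (S.add q₁ q₂) → q₁ = S.zero ∧ q₂ = S.zero)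
    (hzero_div : ∀ q₁ q₂ : Q, S.mul q₁ q₂ = S.zero → q₁ = S.zero ∨ q₂ = S.zero)
    {γ : List Q} {Γ : List (VTy Q)} {ρ : List (CloVal Q)} (hρ : EnvOk S γ Γ ρ) :
    (∀ {V : Val Q} {A : VTy Q}, VHasTy S γ Γ V A →
      ∃ (W : CloVal Q), EvalVal S γ ρ V W) ∧
    (∀ {M : Comp Q} {B : CTy Q}, CHasTy S γ Γ M B →
      ∃ (T : Terminal Q), EvalComp S γ ρ M T) := by
  constructor
  · intro V A hV
    obtain ⟨W, evalV, _⟩ := hV.vSem hnontriv hzero_add hzero_div ρ hρ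
    exact ⟨W, evalV⟩
  · intro M B hM
    obtain ⟨T, evalM, _⟩ := hM.cSem hnontriv hzero_add hzero_div ρ hρ
    exact ⟨T, evalM⟩

end CBPVCo
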